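/- Let C be an open convex cone in a finite-dimensional normed real vector space V and D a balanced cone of directions spanning V. If f : C → ℝ is D-convex and positively 1-homogeneous, then for every x₀ ∈ C ∩ D there exists a linear functional ℓ : V → ℝ with ℓ(x₀) = f(x₀) and f(y) ≥ ℓ(y) for all y ∈ C. In particular, f is convex at every point of C ∩ D. -/

import Mathlib

/-!
For a positively homogeneous `D`-convex `f` and `e ∈ C ∩ D`, upper semicontinuity along rays gives
`f (z + e) ≤ f z + f e`, so `t ↦ f (y + t e) - t f e` is nonincreasing; it is also bounded below.
Its limit as `t → ∞` is the one-sided derivative of `f` at `e` along `y`, which as a function of `y`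
is again `D`-convex and positively homogeneous, now on the whole space, is at most `f` on `C`, and
is affine along `e`. By Zorn's lemma there is a minimal `D`-convex positively homogeneous function
below the derivative at `x₀`. Minimality makes it equal to each of its own derivatives at points of
`D`, so it is affine along every direction of `D`, hence linear.
-/

open Set Metric

/-- D-convexity of a real-valued function on a set `S`. -/
def DConvexOn {V : Type*} [NormedAddCommGroup V] [NormedSpace ℝ V]
    (D S : Set V) (f : V → ℝ) : Prop :=
  ∀ ⦃x y : V⦄, x ∈ S → y ∈ S → x - y ∈ D → segment ℝ x y ⊆ S →
    ConvexOn ℝ (segment ℝ x y) f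

section

open Filter Topology
open scoped Pointwise

variable {V : Type*} [AddCommGroup V] [Module ℝ V] {D : Set V}

/-- A balanced cone of directions spanning the whole space. As in the paper, balanced means closed
under all real scalars, which is stronger than Mathlib's `Balanced`. -/
structure IsSpanningBalancedCone (D : Set V) : Prop where
  smul_mem : ∀ (t : ℝ), ∀ d ∈ D, t • d ∈ D
  span_eq_top : Submodule.span ℝ D = ⊤

/-- Algebraic openness: from each point of `S` one can move a little in every direction without
leaving `S`. -/
def IsRadiallyOpen (S : Set V) : Prop :=
  ∀ x ∈ S, ∀ v : V, ∀ᶠ ε in 𝓝[>] (0 : ℝ), x + ε • v ∈ S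

/-- Convexity along the directions of `D`, as an inequality between values of `f` at points of `S`.
On a convex set `S` it amounts to `DConvexOn`, but it needs no norm. -/
def DirectionallyConvexOn (D S : Set V) (f : V → ℝ) : Prop :=
  ∀ ⦃x d : V⦄, x ∈ S → d ∈ D → x + d ∈ S → ∀ ⦃a : ℝ⦄, 0 ≤ a → a ≤ 1 →
    f (x + a • d) ≤ (1 - a) * f x + a * f (x + d)

/-- The analogue of sublinearity on a convex cone `C`: positive homogeneity, with convexity required
only along the directions of `D`. -/
structure DSublinearOn (D : Set V) (C : ConvexCone ℝ V) (f : V → ℝ) : Prop where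
  directionallyConvexOn : DirectionallyConvexOn D C f
  map_smul : ∀ t : ℝ, 0 < t → ∀ x ∈ C, f (t • x) = t * f x

lemma isRadiallyOpen_univ : IsRadiallyOpen (univ : Set V) :=
  fun _ _ _ ↦ .of_forall fun _ ↦ mem_univ _

theorem IsSpanningBalancedCone.induction (hD : IsSpanningBalancedCone D) {P : V → Prop}
    (zero : P 0) (add : ∀ v, ∀ d ∈ D, P v → P (v + d)) (v : V) : P v := by
  have hv : v ∈ AddSubmonoid.closure ((univ : Set ℝ) • D) := by
    rw [← Submodule.span_eq_closure, hD.span_eq_top]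
    trivial
  induction hv using AddSubmonoid.closure_induction_right with
  | zero => exact zero
  | add_right v _ d hd ih =>
    obtain ⟨t, -, d₀, hd₀, rfl⟩ := Set.mem_smul.1 hd
    exact add v _ (hD.smul_mem t d₀ hd₀) ih

/-- Upper semicontinuity along rays. When `d` is added to `v`, convexity along `d` bounds
`f (x + ε (v + d))` by values on the rays along `v` from the two points `x` and `x + δ d`. -/
theorem DirectionallyConvexOn.eventually_add_smul_lt {S : Set V} {f : V → ℝ}
    (hf : DirectionallyConvexOn D S f) (hD : IsSpanningBalancedCone D) (hS : IsRadiallyOpen S)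
    (v : V) : ∀ x ∈ S, ∀ c, f x < c → ∀ᶠ ε in 𝓝[>] (0 : ℝ), f (x + ε • v) < c := by
  induction v using hD.induction with
  | zero => simp +contextual
  | add v d hd ih =>
    intro x hx c hc
    obtain ⟨δ, hxδ, hδ : 0 < δ⟩ := ((hS x hx d).and self_mem_nhdsWithin).exists
    obtain ⟨c', hfc', hc'⟩ := exists_between hc
    set K := f (x + δ • d) + 1
    have hlim : Tendsto (fun ε : ℝ ↦ (1 - ε / δ) * c' + ε / δ * K) (𝓝[>] 0) (𝓝 c') := by
      have : ContinuousAt (fun ε : ℝ ↦ (1 - ε / δ) * c' + ε / δ * K) 0 := by fun_prop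
      simpa using this.tendsto.mono_left nhdsWithin_le_nhds
    filter_upwards [hS x hx v, hS _ hxδ v, ih x hx c' hfc', ih _ hxδ K (lt_add_one _),
      hlim.eventually_lt_const hc', Ioc_mem_nhdsGT hδ] with ε hmem hmemδ hlt hltδ hltc hε
    rw [add_right_comm] at hmemδ hltδ
    have hε₀ : 0 ≤ ε / δ := div_nonneg hε.1.le hδ.le
    have hε₁ : ε / δ ≤ 1 := (div_le_one hδ).2 hε.2
    calc f (x + ε • (v + d)) = f (x + ε • v + (ε / δ) • δ • d) := by
          rw [smul_smul, div_mul_cancel₀ _ hδ.ne', smul_add, add_assoc]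
      _ ≤ (1 - ε / δ) * f (x + ε • v) + ε / δ * f (x + ε • v + δ • d) :=
          hf hmem (hD.smul_mem δ d hd) hmemδ hε₀ hε₁
      _ ≤ (1 - ε / δ) * c' + ε / δ * K := by gcongr
      _ < c := hltc

section DirDeriv

variable {C : ConvexCone ℝ V} {f : V → ℝ} {e : V}

theorem eventually_add_smul_mem (hC : IsRadiallyOpen (C : Set V)) (he : e ∈ C) (y : V) :
    ∀ᶠ t : ℝ in atTop, y + t • e ∈ C := by
  filter_upwards [tendsto_inv_atTop_nhdsGT_zero.eventually (hC e he y), eventually_gt_atTop 0]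
    with t hmem ht
  have := C.smul_mem ht hmem
  rwa [smul_add, smul_inv_smul₀ ht.ne', add_comm] at this

namespace DSublinearOn

/-- Let `ε → 0` in `f (z + d) ≤ (1 - ε) f z + ε f (z + ε⁻¹ d) = (1 - ε) f z + f (d + ε z)`. -/
theorem map_add_le (hf : DSublinearOn D C f) (hD : IsSpanningBalancedCone D)
    (hC : IsRadiallyOpen (C : Set V)) {z d : V} (hz : z ∈ C) (hdC : d ∈ C) (hdD : d ∈ D) :
    f (z + d) ≤ f z + f d := by
  refine le_of_forall_pos_le_add fun η hη ↦ ?_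
  have hlim : Tendsto (fun ε : ℝ ↦ (1 - ε) * f z + (f d + η)) (𝓝[>] 0)
      (𝓝 (f z + f d + η)) := by
    have : ContinuousAt (fun ε : ℝ ↦ (1 - ε) * f z + (f d + η)) 0 := by fun_prop
    simpa [add_assoc] using this.tendsto.mono_left nhdsWithin_le_nhds
  refine ge_of_tendsto hlim ?_
  filter_upwards [hf.directionallyConvexOn.eventually_add_smul_lt hD hC z d hdC (f d + η)
    (lt_add_of_pos_right _ hη), Ioc_mem_nhdsGT one_pos] with ε hlt ⟨hε, hε₁⟩
  have hmem : z + ε⁻¹ • d ∈ C := C.add_mem hz (C.smul_mem (inv_pos.2 hε) hdC)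
  have hconv := hf.directionallyConvexOn hz (hD.smul_mem ε⁻¹ d hdD) hmem hε.le hε₁
  rw [← hf.map_smul ε hε _ hmem, smul_add, smul_inv_smul₀ hε.ne', add_comm (ε • z)] at hconv
  linarith

end DSublinearOn

/-- By homogeneity this is `t * (f (e + t⁻¹ • y) - f e)`, the difference quotient of `f` at `e`
along `y` with step `t⁻¹`. -/
def diffQuot (f : V → ℝ) (e y : V) (t : ℝ) : ℝ :=
  f (y + t • e) - t * f e

/-- The one-sided directional derivative at `e` along `y` of a positively homogeneous function `f`,
as a limit of difference quotients with step `t⁻¹` (junk if that limit does not exist). -/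
noncomputable def dirDeriv (f : V → ℝ) (e y : V) : ℝ :=
  limUnder atTop (diffQuot f e y)

namespace DSublinearOn

theorem diffQuot_anti (hf : DSublinearOn D C f) (hD : IsSpanningBalancedCone D)
    (hC : IsRadiallyOpen (C : Set V)) (heC : e ∈ C) (heD : e ∈ D) {y : V} {s t : ℝ}
    (hs : y + s • e ∈ C) (hst : s ≤ t) : diffQuot f e y t ≤ diffQuot f e y s := by
  obtain rfl | hlt := hst.eq_or_lt
  · rfl
  have hpos : 0 < t - s := sub_pos.2 hlt
  have hadd := hf.map_add_le hD hC hs (C.smul_mem hpos heC) (hD.smul_mem _ e heD)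
  rw [hf.map_smul _ hpos e heC, add_assoc, ← add_smul, add_sub_cancel] at hadd
  simp only [diffQuot]
  linarith

/-- Along `y + d`, midpoint convexity between `y - d` and `y + d` trades a lower bound for an upper
bound along `y - d`, which monotonicity provides. -/
theorem eventually_le_diffQuot (hf : DSublinearOn D C f) (hD : IsSpanningBalancedCone D)
    (hC : IsRadiallyOpen (C : Set V)) (heC : e ∈ C) (heD : e ∈ D) (y : V) :
    ∃ m, ∀ᶠ t in atTop, m ≤ diffQuot f e y t := by
  induction y using hD.induction with
  | zero =>
    refine ⟨0, (eventually_gt_atTop 0).mono fun t ht ↦ ?_⟩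
    simp [diffQuot, hf.map_smul t ht e heC]
  | add y d hd ih =>
    obtain ⟨m, hm⟩ := ih
    obtain ⟨T, hT⟩ := (eventually_add_smul_mem hC heC (y - d)).exists
    refine ⟨2 * m - diffQuot f e (y - d) T, ?_⟩
    filter_upwards [hm, eventually_ge_atTop T, eventually_add_smul_mem hC heC (y - d),
      eventually_add_smul_mem hC heC (y + d)] with t hmt hTt hmem₁ hmem₂
    have hupper := hf.diffQuot_anti hD hC heC heD hT hTt
    have hend : y - d + t • e + (2 : ℝ) • d = y + d + t • e := by module
    have hmid : y - d + t • e + (1 / 2 : ℝ) • (2 : ℝ) • d = y + t • e := by module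
    have hconv := hf.directionallyConvexOn hmem₁ (hD.smul_mem 2 d hd) (hend ▸ hmem₂)
      one_half_pos.le one_half_lt_one.le
    rw [hend, hmid] at hconv
    simp only [diffQuot] at hmt hupper ⊢
    linarith

theorem tendsto_diffQuot (hf : DSublinearOn D C f) (hD : IsSpanningBalancedCone D)
    (hC : IsRadiallyOpen (C : Set V)) (heC : e ∈ C) (heD : e ∈ D) (y : V) :
    Tendsto (diffQuot f e y) atTop (𝓝 (dirDeriv f e y)) := by
  obtain ⟨m, hm⟩ := hf.eventually_le_diffQuot hD hC heC heD y
  obtain ⟨T, hT⟩ := eventually_atTop.1 ((eventually_add_smul_mem hC heC y).and hm)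
  have hanti : Antitone fun t : Ici T ↦ diffQuot f e y t := fun s _ hst ↦
    hf.diffQuot_anti hD hC heC heD (hT s s.2).1 hst
  have hbdd : BddBelow (range fun t : Ici T ↦ diffQuot f e y t) :=
    ⟨m, forall_mem_range.2 fun t ↦ (hT t t.2).2⟩
  exact tendsto_nhds_limUnder ⟨_, tendsto_comp_val_Ici_atTop.1 (tendsto_atTop_ciInf hanti hbdd)⟩

theorem dirDeriv_le (hf : DSublinearOn D C f) (hD : IsSpanningBalancedCone D)
    (hC : IsRadiallyOpen (C : Set V)) (heC : e ∈ C) (heD : e ∈ D) {y : V} (hy : y ∈ C) :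
    dirDeriv f e y ≤ f y := by
  refine le_of_tendsto (hf.tendsto_diffQuot hD hC heC heD y) ?_
  filter_upwards [eventually_ge_atTop 0] with t ht
  simpa [diffQuot] using hf.diffQuot_anti hD hC heC heD (s := 0) (by simpa using hy) ht

theorem dirDeriv_add_smul (hf : DSublinearOn D C f) (hD : IsSpanningBalancedCone D)
    (hC : IsRadiallyOpen (C : Set V)) (heC : e ∈ C) (heD : e ∈ D) (y : V) (τ : ℝ) :
    dirDeriv f e (y + τ • e) = dirDeriv f e y + τ * f e := by
  have hshift := ((hf.tendsto_diffQuot hD hC heC heD y).comp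
    (tendsto_atTop_add_const_left atTop τ tendsto_id)).add_const (τ * f e)
  refine tendsto_nhds_unique (hf.tendsto_diffQuot hD hC heC heD _) (hshift.congr fun t ↦ ?_)
  simp only [diffQuot, Function.comp_apply, id, add_assoc, add_smul]
  ring

theorem directionallyConvexOn_dirDeriv (hf : DSublinearOn D C f) (hD : IsSpanningBalancedCone D)
    (hC : IsRadiallyOpen (C : Set V)) (heC : e ∈ C) (heD : e ∈ D) :
    DirectionallyConvexOn D univ (dirDeriv f e) := by
  intro x d _ hd _ a ha₀ ha₁
  have hlim := hf.tendsto_diffQuot hD hC heC heD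
  refine le_of_tendsto_of_tendsto (hlim (x + a • d))
    (((hlim x).const_mul (1 - a)).add ((hlim (x + d)).const_mul a)) ?_
  filter_upwards [eventually_add_smul_mem hC heC x, eventually_add_smul_mem hC heC (x + d)]
    with t hx hxd
  rw [add_right_comm] at hxd
  have hconv := hf.directionallyConvexOn hx hd hxd ha₀ ha₁
  simp only [diffQuot, add_right_comm x _ (t • e)]
  linarith

theorem dirDeriv_smul (hf : DSublinearOn D C f) (hD : IsSpanningBalancedCone D)
    (hC : IsRadiallyOpen (C : Set V)) (heC : e ∈ C) (heD : e ∈ D) {s : ℝ} (hs : 0 < s) (y : V) :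
    dirDeriv f e (s • y) = s * dirDeriv f e y := by
  have hdiv : Tendsto (fun t : ℝ ↦ t / s) atTop atTop := tendsto_id.atTop_div_const hs
  have hlim := ((hf.tendsto_diffQuot hD hC heC heD y).comp hdiv).const_mul s
  refine tendsto_nhds_unique (hf.tendsto_diffQuot hD hC heC heD _) (hlim.congr' ?_)
  filter_upwards [hdiv.eventually (eventually_add_smul_mem hC heC y)] with t ht
  have hhom := hf.map_smul s hs _ ht
  rw [smul_add, smul_smul, mul_div_cancel₀ _ hs.ne'] at hhom
  simp only [diffQuot, Function.comp_apply, hhom]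
  field_simp

theorem dSublinearOn_dirDeriv (hf : DSublinearOn D C f) (hD : IsSpanningBalancedCone D)
    (hC : IsRadiallyOpen (C : Set V)) (heC : e ∈ C) (heD : e ∈ D) :
    DSublinearOn D ⊤ (dirDeriv f e) where
  directionallyConvexOn := hf.directionallyConvexOn_dirDeriv hD hC heC heD
  map_smul _ hs y _ := hf.dirDeriv_smul hD hC heC heD hs y

end DSublinearOn

end DirDeriv

namespace DSublinearOn

theorem iInf_of_directed {ι : Type*} [Nonempty ι] {C : ConvexCone ℝ V} {F : ι → V → ℝ}
    (hF : ∀ i, DSublinearOn D C (F i)) (hdir : Directed (· ≥ ·) F)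
    (hbdd : ∀ v, BddBelow (range fun i ↦ F i v)) : DSublinearOn D C (fun v ↦ ⨅ i, F i v) where
  directionallyConvexOn := by
    intro x d hx hd hxd a ha₀ ha₁
    simp only [Real.mul_iInf_of_nonneg (sub_nonneg.2 ha₁), Real.mul_iInf_of_nonneg ha₀]
    refine le_ciInf_add_ciInf fun i j ↦ ?_
    obtain ⟨k, hki, hkj⟩ := hdir i j
    calc ⨅ i, F i (x + a • d) ≤ F k (x + a • d) := ciInf_le (hbdd _) k
      _ ≤ (1 - a) * F k x + a * F k (x + d) := (hF k).directionallyConvexOn hx hd hxd ha₀ ha₁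
      _ ≤ (1 - a) * F i x + a * F j (x + d) :=
        add_le_add (mul_le_mul_of_nonneg_left (hki x) (sub_nonneg.2 ha₁))
          (mul_le_mul_of_nonneg_left (hkj (x + d)) ha₀)
  map_smul t ht x hx := by
    simp only [(hF _).map_smul t ht x hx, Real.mul_iInf_of_nonneg ht.le]

variable {g h : V → ℝ}

theorem map_zero (hh : DSublinearOn D ⊤ h) : h 0 = 0 := by
  have := hh.map_smul 2 two_pos 0 trivial
  rw [smul_zero] at this
  linarith

theorem exists_forall_le_apply (hD : IsSpanningBalancedCone D) (g : V → ℝ) (v : V) :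
    ∃ m, ∀ h, DSublinearOn D ⊤ h → h ≤ g → m ≤ h v := by
  induction v using hD.induction with
  | zero => exact ⟨0, fun h hh _ ↦ hh.map_zero.ge⟩
  | add v d hd ih =>
    obtain ⟨m, hm⟩ := ih
    refine ⟨m - g (-d), fun h hh hhg ↦ ?_⟩
    have hneg : -d ∈ D := by simpa using hD.smul_mem (-1) d hd
    have hadd := hh.map_add_le hD isRadiallyOpen_univ (z := v + d) trivial trivial hneg
    rw [add_neg_cancel_right] at hadd
    linarith [hm h hh hhg, hhg (-d)]

theorem exists_lowerBound_of_isChain (hD : IsSpanningBalancedCone D) {c : Set (V → ℝ)}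
    (hc : IsChain (· ≥ ·) c) (hcS : ∀ h ∈ c, DSublinearOn D ⊤ h) (hne : c.Nonempty) :
    ∃ k, DSublinearOn D ⊤ k ∧ ∀ h ∈ c, k ≤ h := by
  have := hne.to_subtype
  obtain ⟨g, hg⟩ := hne
  have hbdd : ∀ v, BddBelow (range fun h : c ↦ (h : V → ℝ) v) := by
    intro v
    obtain ⟨m, hm⟩ := exists_forall_le_apply hD g v
    refine ⟨min m (g v), forall_mem_range.2 fun h ↦ ?_⟩
    rcases hc.total hg h.2 with hle | hle
    · exact (min_le_left _ _).trans (hm h (hcS h h.2) hle)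
    · exact (min_le_right _ _).trans (hle v)
  exact ⟨_, iInf_of_directed (fun h : c ↦ hcS h h.2) hc.directedOn.directed_val hbdd,
    fun h hh v ↦ ciInf_le (hbdd v) ⟨h, hh⟩⟩

theorem exists_minimal_le (hD : IsSpanningBalancedCone D) (hg : DSublinearOn D ⊤ g) :
    ∃ h ≤ g, Minimal (DSublinearOn D ⊤) h :=
  zorn_le_nonempty₀ (α := (V → ℝ)ᵒᵈ) {h | DSublinearOn D ⊤ h}
    (fun _ hcS hc k hk ↦ exists_lowerBound_of_isChain hD hc hcS ⟨k, hk⟩) g hg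

theorem map_add_smul_of_minimal (hD : IsSpanningBalancedCone D)
    (hh : Minimal (DSublinearOn D ⊤) h) {e : V} (he : e ∈ D) (y : V) (t : ℝ) :
    h (y + t • e) = h y + t * h e := by
  have hle : dirDeriv h e ≤ h := fun v ↦
    hh.prop.dirDeriv_le hD isRadiallyOpen_univ trivial he trivial
  have heq := hh.eq_of_le (hh.prop.dSublinearOn_dirDeriv hD isRadiallyOpen_univ trivial he) hle
  have := hh.prop.dirDeriv_add_smul hD isRadiallyOpen_univ trivial he y t
  rwa [heq] at this

theorem isLinearMap_of_minimal (hD : IsSpanningBalancedCone D)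
    (hh : Minimal (DSublinearOn D ⊤) h) : IsLinearMap ℝ h where
  map_add v w := by
    induction w using hD.induction with
    | zero => simp [hh.prop.map_zero]
    | add w d hd ih =>
      have hadd : ∀ y, h (y + d) = h y + h d := fun y ↦ by
        simpa using map_add_smul_of_minimal hD hh hd y 1
      rw [← add_assoc, hadd, hadd, ih, add_assoc]
  map_smul t v := by
    induction v using hD.induction with
    | zero => simp [hh.prop.map_zero]
    | add v d hd ih =>
      have hadd : h (v + d) = h v + h d := by
        simpa using map_add_smul_of_minimal hD hh hd v 1
      rw [smul_add, map_add_smul_of_minimal hD hh hd, ih, hadd, smul_add, smul_eq_mul, smul_eq_mul]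

theorem exists_linearMap_le (hD : IsSpanningBalancedCone D) (hg : DSublinearOn D ⊤ g) :
    ∃ ℓ : V →ₗ[ℝ] ℝ, ∀ v, ℓ v ≤ g v := by
  obtain ⟨h, hle, hmin⟩ := exists_minimal_le hD hg
  exact ⟨(isLinearMap_of_minimal hD hmin).mk' h, hle⟩

end DSublinearOn

theorem dconvex_homog_convex_at_directions_general (hD : IsSpanningBalancedCone D)
    {C : ConvexCone ℝ V} (hC : IsRadiallyOpen (C : Set V)) {f : V → ℝ} (hf : DSublinearOn D C f)
    {x₀ : V} (hx₀ : x₀ ∈ (C : Set V) ∩ D) :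
    ∃ ℓ : V →ₗ[ℝ] ℝ, ℓ x₀ = f x₀ ∧ ∀ y ∈ C, ℓ y ≤ f y := by
  obtain ⟨hx₀C, hx₀D⟩ := hx₀
  have hderiv := hf.dSublinearOn_dirDeriv hD hC hx₀C hx₀D
  obtain ⟨ℓ, hℓ⟩ := hderiv.exists_linearMap_le hD
  have hℓf : ∀ y ∈ C, ℓ y ≤ f y := fun y hy ↦
    (hℓ y).trans (hf.dirDeriv_le hD hC hx₀C hx₀D hy)
  have hneg : -ℓ x₀ ≤ -f x₀ := by
    have := hf.dirDeriv_add_smul hD hC hx₀C hx₀D 0 (-1)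
    rw [hderiv.map_zero, zero_add, neg_one_smul, zero_add, neg_one_mul] at this
    simpa [this] using hℓ (-x₀)
  exact ⟨ℓ, (hℓf x₀ hx₀C).antisymm (neg_le_neg_iff.1 hneg), hℓf⟩

/-- The convex cone carried by a set closed under positive linear combinations. -/
def coneOfPosComb (C : Set V)
    (hC : ∀ ⦃s t : ℝ⦄, 0 < s → 0 < t → ∀ ⦃x y : V⦄, x ∈ C → y ∈ C → s • x + t • y ∈ C) :
    ConvexCone ℝ V where
  carrier := C
  smul_mem' c hc x hx := by
    simpa [← add_smul] using hC (half_pos hc) (half_pos hc) hx hx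
  add_mem' x hx y hy := by simpa using hC one_pos one_pos hx hy

theorem isRadiallyOpen_of_isOpen [TopologicalSpace V] [ContinuousAdd V] [ContinuousSMul ℝ V]
    {S : Set V} (hS : IsOpen S) : IsRadiallyOpen S := by
  intro x hx v
  have hcont : ContinuousAt (fun ε : ℝ ↦ x + ε • v) 0 := by fun_prop
  exact nhdsWithin_le_nhds (hcont.preimage_mem_nhds (hS.mem_nhds (by simpa using hx)))

end

theorem DConvexOn.directionallyConvexOn {V : Type*} [NormedAddCommGroup V]
    [NormedSpace ℝ V] {D S : Set V} {f : V → ℝ} (hf : DConvexOn D S f) (hS : Convex ℝ S) :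
    DirectionallyConvexOn D S f := by
  intro x d hx hd hxd a ha₀ ha₁
  have hconv := hf hxd hx (by simpa using hd) (hS.segment_subset hxd hx)
  have hpoint : (1 - a) • x + a • (x + d) = x + a • d := by module
  have hle := hconv.2 (right_mem_segment ℝ _ _) (left_mem_segment ℝ _ _)
    (sub_nonneg.2 ha₁) ha₀ (sub_add_cancel 1 a)
  rwa [hpoint] at hle

/-- Theorem 1 of the paper: a D-convex positively 1-homogeneous
function on an open convex cone is convex at each point of `C ∩ D`: it admits a
supporting linear functional there. -/
theorem dconvex_homog_convex_at_directions
    {V : Type*} [NormedAddCommGroup V] [NormedSpace ℝ V] [FiniteDimensional ℝ V]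
    (D : Set V) (hDbal : ∀ (t : ℝ), ∀ x ∈ D, t • x ∈ D)
    (hDspan : Submodule.span ℝ D = ⊤)
    (C : Set V) (hCopen : IsOpen C)
    (hCcone : ∀ ⦃s t : ℝ⦄, 0 < s → 0 < t → ∀ ⦃x y : V⦄, x ∈ C → y ∈ C → s • x + t • y ∈ C)
    (f : V → ℝ) (hf : DConvexOn D C f)
    (hhom : ∀ t : ℝ, 0 < t → ∀ x ∈ C, f (t • x) = t * f x)
    (x₀ : V) (hx₀ : x₀ ∈ C ∩ D) :
    ∃ ℓ : V →ₗ[ℝ] ℝ, ℓ x₀ = f x₀ ∧ ∀ y ∈ C, ℓ y ≤ f y :=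
  dconvex_homog_convex_at_directions_general ⟨hDbal, hDspan⟩ (C := coneOfPosComb C hCcone)
    (isRadiallyOpen_of_isOpen hCopen)
    ⟨hf.directionallyConvexOn (coneOfPosComb C hCcone).convex, hhom⟩ hx₀
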